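/- Consider the random process in which at each step a vertex is chosen uniformly at random from the n vertices, independently of previous choices, and a raising operation is performed there, and define Ψ(t) = ∑_v (r*_v − r_v(t)), the total amount of raising remaining after t steps (by uniqueness of the limiting raising vector, the limiting raising vector of α(t) equals r* − r(t)). Then E[Ψ(t)] ≤ (1 − 1/(2n^3))^t · Ψ(0) for every t ≥ 0. -/

import Mathlib

open Filter Topology

variable {V : Type*}

/-- Maximum weight of an edge leaving `v` (as a supremum over the finite edge set). -/
noncomputable def outMax (E : V → V → Prop) (α : V → V → ℝ) (v : V) : ℝ :=
  sSup {x : ℝ | ∃ w, E v w ∧ x = α v w}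

/-- Maximum weight of an edge entering `v`. -/
noncomputable def inMax (E : V → V → Prop) (α : V → V → ℝ) (v : V) : ℝ :=
  sSup {x : ℝ | ∃ u, E u v ∧ x = α u v}

/-- A graph function is balanced if the max outgoing weight equals the max incoming
weight at every vertex. -/
def IsBalancedGF (E : V → V → Prop) (α : V → V → ℝ) : Prop :=
  ∀ v, outMax E α v = inMax E α v

/-- Raising imbalance at `v`. -/
noncomputable def rhoR (E : V → V → Prop) (α : V → V → ℝ) (v : V) : ℝ :=
  max 0 (outMax E α v - inMax E α v)

/-- Lowering imbalance at `v`. -/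
noncomputable def rhoL (E : V → V → Prop) (α : V → V → ℝ) (v : V) : ℝ :=
  max 0 (inMax E α v - outMax E α v)

/-- A balancing operation at `v`: add `(α_v^out − α_v^in)/2` to every edge entering `v`
and subtract the same quantity from every edge leaving `v` (a self-loop is unchanged). -/
noncomputable def balanceAt [DecidableEq V] (E : V → V → Prop) (α : V → V → ℝ) (v : V) :
    V → V → ℝ :=
  fun a b =>
    α a b + (if b = v then (outMax E α v - inMax E α v) / 2 else 0)
          - (if a = v then (outMax E α v - inMax E α v) / 2 else 0)

/-- A raising operation at `v`: balance at `v` if the raising imbalance is positive,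
otherwise do nothing. -/
noncomputable def raiseOp [DecidableEq V] (E : V → V → Prop) (α : V → V → ℝ) (v : V) :
    V → V → ℝ :=
  if 0 < rhoR E α v then balanceAt E α v else α

/-- A lowering operation at `v`: balance at `v` if the lowering imbalance is positive,
otherwise do nothing. -/
noncomputable def lowerOp [DecidableEq V] (E : V → V → Prop) (α : V → V → ℝ) (v : V) :
    V → V → ℝ :=
  if 0 < rhoL E α v then balanceAt E α v else α

/-- A sequence of vertices is fair if every vertex appears infinitely often. -/
def Fair (σ : ℕ → V) : Prop := ∀ (v : V) (N : ℕ), ∃ t, N ≤ t ∧ σ t = v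

/-- State after `t` raising operations along the sequence `σ`. -/
noncomputable def raiseIter [DecidableEq V] (E : V → V → Prop) (α : V → V → ℝ)
    (σ : ℕ → V) : ℕ → V → V → ℝ
  | 0 => α
  | t + 1 => raiseOp E (raiseIter E α σ t) (σ t)

/-- State after `t` lowering operations along the sequence `σ`. -/
noncomputable def lowerIter [DecidableEq V] (E : V → V → Prop) (α : V → V → ℝ)
    (σ : ℕ → V) : ℕ → V → V → ℝ
  | 0 => α
  | t + 1 => lowerOp E (lowerIter E α σ t) (σ t)

/-- The raising vector: cumulative amount by which each vertex has been raised after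
`t` raising operations along `σ`. -/
noncomputable def rvec [DecidableEq V] (E : V → V → Prop) (α : V → V → ℝ)
    (σ : ℕ → V) : ℕ → V → ℝ
  | 0 => fun _ => 0
  | t + 1 => fun u =>
      rvec E α σ t u + (if u = σ t then rhoR E (raiseIter E α σ t) (σ t) / 2 else 0)

/-- State after performing raising operations along a finite list of vertices. -/
noncomputable def raiseList [DecidableEq V] (E : V → V → Prop) :
    (V → V → ℝ) → List V → V → V → ℝ
  | α, [] => α
  | α, v :: l => raiseList E (raiseOp E α v) l

/-- Raising vector accumulated along a finite list of raising operations. -/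
noncomputable def rvecList [DecidableEq V] (E : V → V → Prop) :
    (V → V → ℝ) → List V → V → ℝ
  | _, [] => fun _ => 0
  | α, v :: l => fun u =>
      (if u = v then rhoR E α v / 2 else 0) + rvecList E (raiseOp E α v) l u

/-- State after performing (unconditional) balancing operations along a list. -/
noncomputable def balList [DecidableEq V] (E : V → V → Prop) :
    (V → V → ℝ) → List V → V → V → ℝ
  | α, [] => α
  | α, v :: l => balList E (balanceAt E α v) l

/-- State after `t` balancing operations along the sequence `σ`. -/
noncomputable def balIter [DecidableEq V] (E : V → V → Prop) (α : V → V → ℝ)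
    (σ : ℕ → V) : ℕ → V → V → ℝ
  | 0 => α
  | t + 1 => balanceAt E (balIter E α σ t) (σ t)

/-- Two graph functions are equivalent if their sums around every directed cycle agree. -/
def Equivalent (E : V → V → Prop) (α γ : V → V → ℝ) : Prop :=
  ∀ (k : ℕ) (f : ZMod (k + 1) → V), (∀ i, E (f i) (f (i + 1))) →
    (∑ i, α (f i) (f (i + 1))) = ∑ i, γ (f i) (f (i + 1))

/-- The raising-balanced graph function determined by the limiting raising vector. -/
noncomputable def alphaR (α : V → V → ℝ) (rstar : V → ℝ) : V → V → ℝ :=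
  fun u v => α u v + rstar v - rstar u

/-- Height of a vertex: `y_v = -r*_v`. -/
noncomputable def height (rstar : V → ℝ) (v : V) : ℝ := -rstar v

/-- Level of a vertex: maximum over incoming edges of `α^R`. -/
noncomputable def level (E : V → V → Prop) (α : V → V → ℝ) (rstar : V → ℝ) (v : V) : ℝ :=
  inMax E (alphaR α rstar) v

/-- Momentum of a vertex: `m_v = max over edges (u,v) entering v of (α_{uv} − x_v)`. -/
noncomputable def momentum (E : V → V → Prop) (α : V → V → ℝ) (rstar : V → ℝ) (v : V) : ℝ :=
  sSup {c : ℝ | ∃ u, E u v ∧ c = α u v - level E α rstar v}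

section helpers

theorem le_outMax [Fintype V] {E : V → V → Prop} (α : V → V → ℝ) {v w : V} (h : E v w) :
    α v w ≤ outMax E α v := by
  apply le_csSup
  · apply Set.Finite.bddAbove
    apply (Set.finite_range (fun w => α v w)).subset
    rintro x ⟨w, _, rfl⟩
    exact ⟨w, rfl⟩
  · exact ⟨w, h, rfl⟩

theorem le_inMax [Fintype V] {E : V → V → Prop} (α : V → V → ℝ) {u v : V} (h : E u v) :
    α u v ≤ inMax E α v := by
  apply le_csSup
  · apply Set.Finite.bddAbove
    apply (Set.finite_range (fun u => α u v)).subset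
    rintro x ⟨w, _, rfl⟩
    exact ⟨w, rfl⟩
  · exact ⟨u, h, rfl⟩

theorem exists_outMax [Fintype V] {E : V → V → Prop} (α : V → V → ℝ) {v : V}
    (h : ∃ w, E v w) : ∃ w, E v w ∧ outMax E α v = α v w := by
  have hf : ({x : ℝ | ∃ w, E v w ∧ x = α v w}).Finite := by
    apply (Set.finite_range (fun w => α v w)).subset
    rintro x ⟨w, _, rfl⟩
    exact ⟨w, rfl⟩
  obtain ⟨w, hw⟩ := h
  have hne : ({x : ℝ | ∃ w, E v w ∧ x = α v w}).Nonempty := ⟨_, w, hw, rfl⟩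
  exact hne.csSup_mem hf

theorem exists_inMax [Fintype V] {E : V → V → Prop} (α : V → V → ℝ) {v : V}
    (h : ∃ u, E u v) : ∃ u, E u v ∧ inMax E α v = α u v := by
  have hf : ({x : ℝ | ∃ u, E u v ∧ x = α u v}).Finite := by
    apply (Set.finite_range (fun u => α u v)).subset
    rintro x ⟨w, _, rfl⟩
    exact ⟨w, rfl⟩
  obtain ⟨w, hw⟩ := h
  have hne : ({x : ℝ | ∃ u, E u v ∧ x = α u v}).Nonempty := ⟨_, w, hw, rfl⟩
  exact hne.csSup_mem hf

theorem rhoR_nonneg (E : V → V → Prop) (α : V → V → ℝ) (v : V) : 0 ≤ rhoR E α v :=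
  le_max_left _ _

theorem out_le (E : V → V → Prop) (α : V → V → ℝ) (v : V) :
    outMax E α v ≤ inMax E α v + rhoR E α v := by
  have := le_max_right 0 (outMax E α v - inMax E α v)
  unfold rhoR; linarith

theorem raiseOp_apply [DecidableEq V] (E : V → V → Prop) (α : V → V → ℝ) (v a b : V) :
    raiseOp E α v a b = α a b + (if b = v then rhoR E α v / 2 else 0)
      - (if a = v then rhoR E α v / 2 else 0) := by
  unfold raiseOp
  by_cases h : 0 < rhoR E α v
  · have h2 : rhoR E α v = outMax E α v - inMax E α v := by
      unfold rhoR at h ⊢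
      rcases max_choice 0 (outMax E α v - inMax E α v) with h3 | h3
      · rw [h3] at h; exact absurd h (lt_irrefl _)
      · exact h3
    rw [if_pos h, h2, balanceAt]
  · have h2 : rhoR E α v = 0 := le_antisymm (not_lt.mp h) (rhoR_nonneg _ _ _)
    rw [if_neg h, h2]
    simp

/-- `s` makes `α` raising-balanced. -/
def RB (E : V → V → Prop) (α : V → V → ℝ) (s : V → ℝ) : Prop :=
  ∀ v w, E v w → ∃ u, E u v ∧ α v w + s w - s v ≤ α u v + s v - s u

/-- `r` is the least nonnegative vector balancing `α`. -/
structure Least (E : V → V → Prop) (α : V → V → ℝ) (r : V → ℝ) : Prop where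
  nonneg : ∀ v, 0 ≤ r v
  bal : RB E α r
  least : ∀ s : V → ℝ, (∀ v, 0 ≤ s v) → RB E α s → ∀ v, r v ≤ s v

theorem rho_le [Fintype V] {E : V → V → Prop} (hout : ∀ v, ∃ w, E v w)
    {α : V → V → ℝ} {s : V → ℝ}
    (hs : ∀ v, 0 ≤ s v) (hb : RB E α s) (v : V) : rhoR E α v / 2 ≤ s v := by
  unfold rhoR
  rcases max_choice 0 (outMax E α v - inMax E α v) with h3 | h3
  · rw [h3]; simpa using hs v
  · rw [h3]
    obtain ⟨w, hw, hw2⟩ := exists_outMax α (hout v)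
    obtain ⟨u, hu, hu2⟩ := hb v w hw
    have := le_inMax α hu
    have := hs w
    have := hs u
    linarith

theorem RB_shift {E : V → V → Prop} {α β : V → V → ℝ} {d s s' : V → ℝ}
    (hβ : ∀ a b, β a b = α a b + d b - d a) (hs : ∀ v, s' v = s v + d v) :
    RB E β s ↔ RB E α s' := by
  unfold RB
  refine forall₃_congr fun v w _ => exists_congr fun u => and_congr_right fun _ => ?_
  rw [hβ, hβ, hs, hs, hs]
  constructor <;> intro h <;> linarith

theorem Least.step [Fintype V] [DecidableEq V] {E : V → V → Prop} (hout : ∀ v, ∃ w, E v w)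
    {α : V → V → ℝ} {r : V → ℝ} (h : Least E α r) (v : V) :
    Least E (raiseOp E α v) (fun u => r u - if u = v then rhoR E α v / 2 else 0) := by
  refine ⟨fun u => ?_, ?_, fun s hs hb u => ?_⟩
  · split_ifs with hu
    · subst hu
      have := rho_le hout h.nonneg h.bal u
      linarith
    · simpa using h.nonneg u
  · exact (RB_shift (d := fun u => if u = v then rhoR E α v / 2 else 0)
      (raiseOp_apply E α v) (s' := r) (fun u => by ring)).2 h.bal
  · have hb2 := (RB_shift (d := fun u => if u = v then rhoR E α v / 2 else 0)
      (raiseOp_apply E α v) (s' := fun u => s u + if u = v then rhoR E α v / 2 else 0)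
      (fun u => rfl)).1 hb
    have := h.least _ (fun u => by
      have := rhoR_nonneg E α v
      have := hs u
      split_ifs <;> linarith) hb2 u
    linarith

theorem raiseIter_eq [DecidableEq V] (E : V → V → Prop) (α : V → V → ℝ) (σ : ℕ → V) (t : ℕ)
    (a b : V) : raiseIter E α σ t a b = α a b + rvec E α σ t b - rvec E α σ t a := by
  induction t with
  | zero => simp [raiseIter, rvec]
  | succ t ih =>
    simp only [raiseIter, rvec, raiseOp_apply, ih]
    ring

theorem rvec_nonneg [DecidableEq V] (E : V → V → Prop) (α : V → V → ℝ) (σ : ℕ → V) (t : ℕ)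
    (v : V) : 0 ≤ rvec E α σ t v := by
  induction t with
  | zero => simp [rvec]
  | succ t ih =>
    simp only [rvec]
    have := rhoR_nonneg E (raiseIter E α σ t) (σ t)
    split_ifs <;> linarith

theorem rvec_le [Fintype V] [DecidableEq V] {E : V → V → Prop} (hout : ∀ v, ∃ w, E v w)
    {α : V → V → ℝ} (σ : ℕ → V) {s : V → ℝ} (hs : ∀ v, 0 ≤ s v) (hb : RB E α s) (t : ℕ) :
    ∀ v, rvec E α σ t v ≤ s v := by
  induction t with
  | zero => simpa [rvec] using hs
  | succ t ih =>
    intro v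
    simp only [rvec]
    split_ifs with hv
    · have hb2 := (RB_shift (β := raiseIter E α σ t) (α := α) (d := rvec E α σ t)
        (raiseIter_eq E α σ t) (s := fun u => s u - rvec E α σ t u) (s' := s)
        (fun u => by ring)).2 hb
      have := rho_le hout (fun u => sub_nonneg.2 (ih u)) hb2 v
      subst hv
      linarith
    · simpa using ih v

theorem exists_fair [Fintype V] [Nonempty V] : ∃ σ : ℕ → V, Fair σ := by
  have hn : 0 < Fintype.card V := Fintype.card_pos
  refine ⟨fun t => (Fintype.equivFin V).symm ⟨t % Fintype.card V, Nat.mod_lt _ hn⟩, ?_⟩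
  intro v N
  refine ⟨(Fintype.equivFin V v).1 + Fintype.card V * N, ?_, ?_⟩
  · nlinarith
  · simp only [Nat.add_mul_mod_self_left, Nat.mod_eq_of_lt (Fintype.equivFin V v).2]
    simp

theorem least_of_limit [Fintype V] [Nonempty V] [DecidableEq V] {E : V → V → Prop}
    (hout : ∀ v, ∃ w, E v w) (hin : ∀ v, ∃ u, E u v)
    {α : V → V → ℝ} {r : V → ℝ}
    (hr : ∀ σ : ℕ → V, Fair σ → ∀ v,
      Tendsto (fun t => rvec E α σ t v) atTop (nhds (r v))) : Least E α r := by
  obtain ⟨σ, hσ⟩ := exists_fair (V := V)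
  have hl := hr σ hσ
  refine ⟨fun v => ge_of_tendsto' (hl v) fun t => rvec_nonneg E α σ t v, ?_,
    fun s hs hb v => le_of_tendsto' (hl v) fun t => rvec_le hout σ hs hb t v⟩
  intro v w hw
  by_contra! hcon
  have hev : ∀ᶠ t in atTop, ∀ u, E u v →
      α u v + rvec E α σ t v - rvec E α σ t u + 2 * (rvec E α σ (t+1) v - rvec E α σ t v)
       < α v w + rvec E α σ t w - rvec E α σ t v := by
    rw [eventually_all]
    intro u
    by_cases hu : E u v
    · have h1 : Tendsto (fun t => α u v + rvec E α σ t v - rvec E α σ t u +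
          2 * (rvec E α σ (t+1) v - rvec E α σ t v)) atTop
          (nhds (α u v + r v - r u + 2 * (r v - r v))) :=
        ((tendsto_const_nhds.add (hl v)).sub (hl u)).add
          ((((tendsto_add_atTop_iff_nat 1).2 (hl v)).sub (hl v)).const_mul 2)
      have h2 : Tendsto (fun t => α v w + rvec E α σ t w - rvec E α σ t v) atTop
          (nhds (α v w + r w - r v)) := (tendsto_const_nhds.add (hl w)).sub (hl v)
      filter_upwards [h1.eventually_lt h2 (by have := hcon u hu; linarith)] with t ht _
      exact ht
    · simp [hu]
  obtain ⟨N, hN⟩ := eventually_atTop.1 hev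
  obtain ⟨t, ht, htv⟩ := hσ v N
  obtain ⟨u, hu, hu2⟩ := exists_inMax (raiseIter E α σ t) (hin v)
  have h1 := hN t ht u hu
  have h2 := out_le E (raiseIter E α σ t) v
  have h3 := le_outMax (raiseIter E α σ t) hw
  have h4 : rvec E α σ (t+1) v = rvec E α σ t v + rhoR E (raiseIter E α σ t) v / 2 := by
    simp [rvec, htv]
  rw [hu2] at h2
  rw [raiseIter_eq] at h2 h3
  linarith

variable [Fintype V] {E : V → V → Prop} {α : V → V → ℝ} {r : V → ℝ}

theorem Least.tight_le (h : Least E α r) {v w : V} (hw : E v w) :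
    alphaR α r v w ≤ level E α r v := by
  obtain ⟨u, hu, hu2⟩ := h.bal v w hw
  exact hu2.trans (le_inMax (alphaR α r) hu)

/-- No subset of positive vertices can be lowered. -/
theorem Least.no_lower (hin : ∀ v, ∃ u, E u v) (h : Least E α r) (T : Set V)
    (hne : T.Nonempty) (hpos : ∀ v ∈ T, 0 < r v)
    (h1 : ∀ v ∈ T, ∀ w, E v w → w ∉ T → alphaR α r v w < level E α r v)
    (h2 : ∀ v ∈ T, (∃ u ∈ T, E u v ∧ alphaR α r u v = level E α r v) ∨
      ∀ w, E v w → alphaR α r v w < level E α r v) : False := by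
  classical
  have hε : ∃ ε : ℝ, 0 < ε ∧ (∀ v ∈ T, ε ≤ r v) ∧
      ∀ v w, alphaR α r v w < level E α r v → 2 * ε ≤ level E α r v - alphaR α r v w := by
    have e1 : ∀ᶠ ε : ℝ in 𝓝[>] 0, ∀ v, v ∈ T → ε ≤ r v := by
      rw [eventually_all]
      intro v
      by_cases hv : v ∈ T
      · filter_upwards [Ioc_mem_nhdsGT (hpos v hv)] with ε h _
        exact h.2
      · simp [hv]
    have e2 : ∀ᶠ ε : ℝ in 𝓝[>] 0, ∀ v w, alphaR α r v w < level E α r v →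
        2 * ε ≤ level E α r v - alphaR α r v w := by
      rw [eventually_all]; intro v
      rw [eventually_all]; intro w
      by_cases hv : alphaR α r v w < level E α r v
      · filter_upwards [Ioc_mem_nhdsGT (half_pos (sub_pos.2 hv))] with ε h _
        linarith [h.2]
      · simp [hv]
    obtain ⟨ε, h1, h2, h3⟩ := (e1.and (e2.and self_mem_nhdsWithin)).exists
    exact ⟨ε, h3, h1, h2⟩
  obtain ⟨ε, hε0, hε1, hε2⟩ := hε
  have key : RB E α (fun v => r v - if v ∈ T then ε else 0) := by
    intro v w hw
    have htl := h.tight_le hw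
    obtain ⟨u, hu, hu2⟩ := exists_inMax (alphaR α r) (hin v)
    have hu3 : level E α r v = alphaR α r u v := hu2
    by_cases hv : v ∈ T
    · by_cases ht : alphaR α r v w < level E α r v
      · have := hε2 v w ht
        refine ⟨u, hu, ?_⟩
        unfold alphaR at *
        simp only [hv, if_true]
        split_ifs <;> linarith
      · have hwT : w ∈ T := by
          by_contra hwT
          exact ht (h1 v hv w hw hwT)
        rcases h2 v hv with ⟨u', hu', huE, hut⟩ | h3
        · refine ⟨u', huE, ?_⟩
          unfold alphaR at *
          simp only [hv, hu', hwT, if_true]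
          linarith
        · exact absurd (h3 w hw) ht
    · refine ⟨u, hu, ?_⟩
      unfold alphaR at *
      simp only [hv, if_false]
      split_ifs <;> linarith
  obtain ⟨v, hv⟩ := hne
  have := h.least _ (fun v => by
    by_cases hv : v ∈ T
    · simpa [hv] using hε1 v hv
    · simpa [hv] using h.nonneg v) key v
  simp only [hv, if_true] at this
  linarith

theorem Least.exists_tight (hin : ∀ v, ∃ u, E u v) (h : Least E α r) {v : V} (hv : 0 < r v) :
    ∃ w, E v w ∧ alphaR α r v w = level E α r v := by
  by_contra! hcon
  have h3 : ∀ w, E v w → alphaR α r v w < level E α r v :=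
    fun w hw => lt_of_le_of_ne (h.tight_le hw) (hcon w hw)
  refine h.no_lower hin {v} ⟨v, rfl⟩ ?_ ?_ ?_
  · rintro _ rfl; exact hv
  · rintro _ rfl w hw _; exact h3 w hw
  · rintro _ rfl; exact Or.inr h3

/-- A nonempty set of positive vertices, all of one level, is not closed under tight edges. -/
theorem Least.not_closed (hin : ∀ v, ∃ u, E u v) (h : Least E α r) (x : ℝ) (C : Set V)
    (hne : C.Nonempty) (hpos : ∀ v ∈ C, 0 < r v) (hx : ∀ v ∈ C, level E α r v = x)
    (hcl : ∀ v ∈ C, ∀ w, E v w → alphaR α r v w = level E α r v → w ∈ C) : False := by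
  let P : Set V → Prop := fun T => T ⊆ C ∧ T.Nonempty ∧
    ∀ v ∈ T, ∀ w, E v w → alphaR α r v w = level E α r v → w ∈ T
  obtain ⟨T, hT⟩ := (Set.toFinite {T | P T}).exists_minimal ⟨C, subset_rfl, hne, hcl⟩
  obtain ⟨⟨hTC, hTne, hTcl⟩, hmin⟩ := hT
  let T' : Set V := {w | ∃ v ∈ T, E v w ∧ alphaR α r v w = level E α r v}
  have hT'T : T' ⊆ T := by
    rintro w ⟨v, hv, hw, ht⟩
    exact hTcl v hv w hw ht
  have hPT' : P T' := by
    refine ⟨hT'T.trans hTC, ?_, ?_⟩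
    · obtain ⟨v, hv⟩ := hTne
      obtain ⟨w, hw, ht⟩ := h.exists_tight hin (hpos v (hTC hv))
      exact ⟨w, v, hv, hw, ht⟩
    · intro v hv w hw ht
      exact ⟨v, hT'T hv, hw, ht⟩
  have hTT' : T ⊆ T' := hmin hPT' hT'T
  refine h.no_lower hin T hTne (fun v hv => hpos v (hTC hv)) ?_ ?_
  · intro v hv w hw hwT
    exact lt_of_le_of_ne (h.tight_le hw) fun ht => hwT (hTcl v hv w hw ht)
  · intro v hv
    obtain ⟨u, hu, huv, ht⟩ := hTT' hv
    exact Or.inl ⟨u, hu, huv, by rw [ht, hx u (hTC hu), hx v (hTC hv)]⟩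

open Classical in
theorem Least.in_le (hin : ∀ v, ∃ u, E u v) (h : Least E α r) (x B : ℝ)
    (hB : ∀ u, x < level E α r u → r u ≤ B) (k : ℕ) :
    ∀ v, (Finset.univ.filter (fun u => r v < r u)).card ≤ k → B < r v →
      inMax E α v ≤ x + ∑ u ∈ Finset.univ.filter (fun u => r v < r u), rhoR E α u := by
  induction k with
  | zero =>
    intro v hk hv
    by_contra! hcon
    have h0 : (Finset.univ.filter (fun u => r v < r u)) = ∅ :=
      Finset.card_eq_zero.1 (Nat.le_zero.1 hk)
    rw [h0, Finset.sum_empty] at hcon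
    obtain ⟨u, hu, hu2⟩ := exists_inMax α (hin v)
    have h1 : alphaR α r u v ≤ level E α r v := le_inMax (alphaR α r) hu
    have h2 : level E α r v ≤ x := by
      by_contra! h2; linarith [hB v h2]
    have h3 : u ∈ (Finset.univ.filter (fun u => r v < r u)) := by
      simp only [Finset.mem_filter, Finset.mem_univ, true_and]
      unfold alphaR at h1
      linarith
    rw [h0] at h3
    simp at h3
  | succ k ih =>
    intro v hk hv
    have hnn : 0 ≤ ∑ u ∈ Finset.univ.filter (fun u => r v < r u), rhoR E α u :=
      Finset.sum_nonneg fun u _ => rhoR_nonneg E α u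
    by_cases hc : inMax E α v ≤ x
    · linarith
    push Not at hc
    obtain ⟨u, hu, hu2⟩ := exists_inMax α (hin v)
    have h1 : alphaR α r u v ≤ level E α r v := le_inMax (alphaR α r) hu
    have h2 : level E α r v ≤ x := by
      by_contra! h2; linarith [hB v h2]
    have h3 : r v < r u := by
      unfold alphaR at h1
      linarith
    have hsub : insert u (Finset.univ.filter (fun w => r u < r w)) ⊆
        Finset.univ.filter (fun w => r v < r w) := by
      intro w hw
      simp only [Finset.mem_insert, Finset.mem_filter, Finset.mem_univ, true_and] at hw ⊢
      rcases hw with rfl | hw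
      · exact h3
      · exact h3.trans hw
    have hnot : u ∉ Finset.univ.filter (fun w => r u < r w) := by simp
    have hcard := Finset.card_le_card hsub
    rw [Finset.card_insert_of_notMem hnot] at hcard
    have h4 := ih u (by omega) (hv.trans h3)
    have h5 := Finset.sum_le_sum_of_subset_of_nonneg hsub
      (f := fun w => rhoR E α w) (fun w _ _ => rhoR_nonneg E α w)
    rw [Finset.sum_insert hnot] at h5
    have h6 := le_outMax α hu
    have h7 := out_le E α u
    linarith

theorem Least.out_le (hin : ∀ v, ∃ u, E u v) (h : Least E α r) (x B : ℝ)
    (hB : ∀ u, x < level E α r u → r u ≤ B) (v : V) (hv : B < r v) :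
    outMax E α v ≤ x + ∑ u, rhoR E α u := by
  classical
  have h1 := h.in_le hin x B hB _ v le_rfl hv
  have hnot : v ∉ Finset.univ.filter (fun w => r v < r w) := by simp
  have h5 := Finset.sum_le_sum_of_subset_of_nonneg
    (Finset.subset_univ (insert v (Finset.univ.filter (fun w => r v < r w))))
    (f := fun w => rhoR E α w) (fun w _ _ => rhoR_nonneg E α w)
  rw [Finset.sum_insert hnot] at h5
  have h7 := _root_.out_le E α v
  linarith

theorem Least.gap (hin : ∀ v, ∃ u, E u v) (h : Least E α r) (c : ℝ) (hc : 0 ≤ c)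
    (hex : ∃ v, c < r v) : ∃ v, c < r v ∧ r v ≤ c + ∑ u, rhoR E α u := by
  by_contra! hcon
  obtain ⟨v0, hv0, hmax⟩ := Set.exists_max_image {v | c < r v} (level E α r)
    (Set.toFinite _) hex
  set x := level E α r v0
  refine h.not_closed hin x {v | c < r v ∧ level E α r v = x} ⟨v0, hv0, rfl⟩
    (fun v hv => hc.trans_lt hv.1) (fun v hv => hv.2) ?_
  rintro v ⟨hv, hvx⟩ w hw ht
  have hB : ∀ u, x < level E α r u → r u ≤ c := by
    intro u hu
    by_contra! h2
    exact absurd (hmax u h2) (not_le.2 hu)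
  have h1 := h.out_le hin x c hB v hv
  have h2 := le_outMax α hw
  have h3 := hcon v hv
  have h4 : alphaR α r v w ≤ level E α r w := le_inMax (alphaR α r) hw
  rw [ht, hvx] at h4
  have hcw : c < r w := by
    rw [hvx] at ht
    unfold alphaR at ht
    linarith
  exact ⟨hcw, le_antisymm (hmax w hcw) h4⟩

theorem Least.bound (hin : ∀ v, ∃ u, E u v) (h : Least E α r) (v : V) :
    r v ≤ Fintype.card V * ∑ u, rhoR E α u := by
  classical
  set R := ∑ u, rhoR E α u with hR
  have hR0 : 0 ≤ R := Finset.sum_nonneg fun u _ => rhoR_nonneg E α u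
  have key : ∀ k : ℕ, (∃ v, k * R < r v) →
      k ≤ (Finset.univ.filter (fun u => r u ≤ k * R)).card := by
    intro k
    induction k with
    | zero => simp
    | succ k ih =>
      rintro ⟨v, hv⟩
      push_cast at hv ⊢
      have hkv : k * R < r v := by nlinarith
      have h1 := ih ⟨v, hkv⟩
      obtain ⟨u, hu1, hu2⟩ := h.gap hin (k * R) (by positivity) ⟨v, hkv⟩
      have hsub : insert u (Finset.univ.filter (fun u => r u ≤ k * R)) ⊆
          Finset.univ.filter (fun u => r u ≤ (k + 1) * R) := by
        intro w hw
        simp only [Finset.mem_insert, Finset.mem_filter, Finset.mem_univ, true_and] at hw ⊢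
        rcases hw with rfl | hw
        · linarith
        · linarith
      have hcard := Finset.card_le_card hsub
      rw [Finset.card_insert_of_notMem (by simpa using hu1)] at hcard
      omega
  by_contra! hcon
  have h1 := key _ ⟨v, hcon⟩
  have h2 : (Finset.univ.filter (fun u => r u ≤ Fintype.card V * R)).card
      < Fintype.card V := by
    apply Finset.card_lt_univ_of_notMem (x := v)
    simpa using hcon
  omega

theorem Least.sum_bound (hin : ∀ v, ∃ u, E u v) (h : Least E α r) :
    ∑ v, r v ≤ (Fintype.card V : ℝ) ^ 2 * ∑ u, rhoR E α u := by
  calc ∑ v, r v ≤ ∑ _v : V, Fintype.card V * ∑ u, rhoR E α u :=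
        Finset.sum_le_sum fun v _ => h.bound hin v
    _ = _ := by
        rw [Finset.sum_const, Finset.card_univ, nsmul_eq_mul]; ring

theorem Least.decay [Nonempty V] [DecidableEq V] (hout : ∀ v, ∃ w, E v w)
    (hin : ∀ v, ∃ u, E u v) (t : ℕ) : ∀ (α : V → V → ℝ) (r : V → ℝ), Least E α r →
    (∑ τ : Fin t → V, ∑ v, (r v - rvecList E α (List.ofFn τ) v)) ≤
      ((1 - 1 / (2 * (Fintype.card V : ℝ) ^ 3)) * Fintype.card V) ^ t * ∑ v, r v := by
  have hn : (1 : ℝ) ≤ Fintype.card V := by exact_mod_cast Fintype.card_pos (α := V)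
  set n : ℝ := (Fintype.card V : ℝ) with hndef
  have hq : 0 ≤ 1 - 1 / (2 * n ^ 3) := by
    have : 1 ≤ n ^ 3 := one_le_pow₀ hn
    rw [sub_nonneg, div_le_one (by positivity)]
    linarith
  induction t with
  | zero => intro α r h; simp [rvecList]
  | succ t ih =>
    intro α r h
    have hsplit : (∑ τ : Fin (t+1) → V, ∑ v, (r v - rvecList E α (List.ofFn τ) v)) =
        ∑ v : V, ∑ τ : Fin t → V, ∑ u, ((r u - if u = v then rhoR E α v / 2 else 0)
          - rvecList E (raiseOp E α v) (List.ofFn τ) u) := by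
      rw [← (Fin.consEquiv (fun _ : Fin (t+1) => V)).sum_comp, Fintype.sum_prod_type]
      refine Finset.sum_congr rfl fun v _ => Finset.sum_congr rfl fun τ _ =>
        Finset.sum_congr rfl fun u _ => ?_
      simp [Fin.consEquiv, List.ofFn_succ, rvecList]
      ring
    rw [hsplit]
    set q := 1 - 1 / (2 * n ^ 3) with hqdef
    have hb := h.sum_bound hin
    calc _ ≤ ∑ v : V, (q * n) ^ t * ∑ u, (r u - if u = v then rhoR E α v / 2 else 0) :=
          Finset.sum_le_sum fun v _ => ih _ _ (h.step hout v)
      _ = (q * n) ^ t * (n * ∑ u, r u - (∑ v, rhoR E α v) / 2) := by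
          rw [← Finset.mul_sum]
          congr 1
          simp [Finset.sum_sub_distrib, Finset.sum_div, hndef]
      _ ≤ (q * n) ^ t * (q * n * ∑ u, r u) := by
          apply mul_le_mul_of_nonneg_left _ (by positivity)
          have h3 : q * n * ∑ u, r u = n * ∑ u, r u - (∑ u, r u) / (2 * n ^ 2) := by
            rw [hqdef]; field_simp
          rw [h3]
          have : (∑ u, r u) / (2 * n ^ 2) ≤ (∑ v, rhoR E α v) / 2 := by
            rw [div_le_div_iff₀ (by positivity) (by positivity)]
            linarith
          linarith
      _ = _ := by ring

end helpers

/-- For the random process choosing a uniformly random vertex at each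
step and raising there, the expected remaining total raising
`Ψ(t) = ∑_v (r*_v − r_v(t))` satisfies `E[Ψ(t)] ≤ (1 − 1/(2n³))^t · Ψ(0)`.
The expectation is written as the average over all `n^t` equally likely length-`t`
sequences of vertices, and `Ψ(0) = ∑_v r*_v`. -/
theorem expected_remaining_raising_decay
    [Fintype V] [Nonempty V] [DecidableEq V] (E : V → V → Prop)
    (hout : ∀ v, ∃ w, E v w) (hin : ∀ v, ∃ u, E u v)
    (hconn : ∀ u v : V, Relation.ReflTransGen E u v)
    (α : V → V → ℝ) (rstar : V → ℝ)
    (hrstar : ∀ σ : ℕ → V, Fair σ → ∀ v,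
      Tendsto (fun t => rvec E α σ t v) atTop (nhds (rstar v)))
    (t : ℕ) :
    (∑ τ : Fin t → V, ∑ v, (rstar v - rvecList E α (List.ofFn τ) v)) /
        (Fintype.card V : ℝ) ^ t ≤
      (1 - 1 / (2 * (Fintype.card V : ℝ) ^ 3)) ^ t * ∑ v, rstar v := by
  have hn : (0 : ℝ) < Fintype.card V := by exact_mod_cast Fintype.card_pos (α := V)
  rw [div_le_iff₀ (by positivity)]
  have := Least.decay hout hin t α rstar
    (least_of_limit hout hin hrstar)
  rw [mul_pow] at this
  linarith
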